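/- Weight verification in the extrapolation proof (Case $q_n>p_n$): Let $1\le p_i\le\infty$ for $1\le i\le n-1$, $1<p_n<q_n\le\infty$, $1/p=\sum_{i=1}^n 1/p_i>0$, $1/q=1/p-1/p_n+1/q_n>0$ and $1/s=1/p_n-1/q_n$. Let $\widehat w,\widehat\lambda$ be weights on $\mathbb{R}^{d_1}\times\mathbb{R}^{d_2}$, let $w_n$ be a weight, and set $W_w=w_n\widehat w^{1/q_n'}$, $W_\lambda=w_n\widehat\lambda^{1/q_n'}$. Assume $W_w\in A_{q_n,q}(\widehat w)$, and let $H$ be an a.e. positive function satisfying the $A_1$ control $\big[w_n^{\frac{q_n'}{1+q_n'/q}}(W_\lambda^q\widehat\lambda)^{\frac{1}{1+q_n'/q}}H^{\frac{s}{p(1+q_n'/q)}}\big]_{A_1(\widehat w)}\le N$. Then the weight $v_n:=H^{1/p}W_\lambda^{q/p}\widehat\lambda^{-1/p_n'}$ satisfies $v_n\widehat w^{1/p_n'}\in A_{p_n,p}(\widehat w)$ with $[v_n\widehat w^{1/p_n'}]_{A_{p_n,p}(\widehat w)}\le C(N)\,[W_w]_{A_{q_n,q}(\widehat w)}^{q_n'/p_n'}$.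 -/

import Mathlib

open MeasureTheory ENNReal
open scoped Classical

noncomputable section

/-- A point of the bi-parameter space `ℝ^{d₁} × ℝ^{d₂}`. -/
abbrev Pt (d₁ d₂ : ℕ) := (Fin d₁ → ℝ) × (Fin d₂ → ℝ)

/-- The axis-parallel cube with corner `a` and side length `h`. -/
def cubeOf {d : ℕ} (a : Fin d → ℝ) (h : ℝ) : Set (Fin d → ℝ) :=
  Set.univ.pi fun i => Set.Ico (a i) (a i + h)

/-- An axis-parallel cube in `ℝ^d` (with positive side length). -/
def IsCube {d : ℕ} (I : Set (Fin d → ℝ)) : Prop :=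
  ∃ a h, 0 < h ∧ I = cubeOf a h

/-- A rectangle `R = I¹ × I²`: a product of axis-parallel cubes. -/
def IsRect {d₁ d₂ : ℕ} (R : Set (Pt d₁ d₂)) : Prop :=
  ∃ I₁ I₂, IsCube I₁ ∧ IsCube I₂ ∧ R = I₁ ×ˢ I₂

/-- A standard dyadic cube `2^{-k}([0,1)^d + m)`. -/
def IsDyadicCube {d : ℕ} (I : Set (Fin d → ℝ)) : Prop :=
  ∃ (k : ℤ) (m : Fin d → ℤ),
    I = Set.univ.pi fun i => Set.Ico ((2:ℝ) ^ (-k) * m i) ((2:ℝ) ^ (-k) * (m i + 1))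

/-- A standard dyadic rectangle. -/
def IsDyadicRect {d₁ d₂ : ℕ} (R : Set (Pt d₁ d₂)) : Prop :=
  ∃ I₁ I₂, IsDyadicCube I₁ ∧ IsDyadicCube I₂ ∧ R = I₁ ×ˢ I₂

variable {X : Type*} [MeasureSpace X]

/-- `ℝ≥0∞`-valued average `⟨f⟩_R` of a (nonnegative) function over `R`. -/
def avgE (R : Set X) (f : X → ℝ) : ℝ≥0∞ :=
  (∫⁻ x in R, ENNReal.ofReal (f x)) / volume R

/-- essential supremum of a (nonnegative) function on `R`. -/
def essSupE (R : Set X) (f : X → ℝ) : ℝ≥0∞ :=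
  essSup (fun x => ENNReal.ofReal (f x)) (volume.restrict R)

/-- real-valued average `⟨f⟩_R`. -/
def avgR (R : Set X) (f : X → ℝ) : ℝ :=
  (∫ x in R, f x) / (volume R).toReal

/-- Hölder conjugate exponent on `ℝ≥0∞`. -/
def dualExp (p : ℝ≥0∞) : ℝ≥0∞ :=
  if p = 1 then ∞ else if p = ∞ then 1 else ENNReal.ofReal (p.toReal / (p.toReal - 1))

/-- `⟨w^p⟩_R^{1/p}`, interpreted as `ess sup_R w` when `p = ∞`. -/
def mainFactor (R : Set X) (w : X → ℝ) (p : ℝ≥0∞) : ℝ≥0∞ :=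
  if p = ∞ then essSupE R w
  else (avgE R fun x => w x ^ p.toReal) ^ (1 / p.toReal)

/-- `⟨w^{-p'}⟩_R^{1/p'}`, interpreted as `ess sup_R w⁻¹` when `p = 1`. -/
def dualFactor (R : Set X) (w : X → ℝ) (p : ℝ≥0∞) : ℝ≥0∞ :=
  if p = 1 then essSupE R fun x => (w x)⁻¹
  else (avgE R fun x => w x ^ (-(dualExp p).toReal)) ^ (1 / (dualExp p).toReal)

/-- `A_r` ratio on a set, `1 ≤ r < ∞`, with the `A_1` interpretation at `r = 1`. -/
def ArRatio (r : ℝ≥0∞) (R : Set X) (v : X → ℝ) : ℝ≥0∞ :=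
  if r = 1 then avgE R v * essSupE R (fun x => (v x)⁻¹)
  else avgE R v * (avgE R fun x => v x ^ (-(1 / (r.toReal - 1)))) ^ (r.toReal - 1)

/-- Bi-parameter `A_r` characteristic: supremum over all rectangles. -/
def ArRect {d₁ d₂ : ℕ} (r : ℝ≥0∞) (v : Pt d₁ d₂ → ℝ) : ℝ≥0∞ :=
  ⨆ (R : Set (Pt d₁ d₂)) (_ : IsRect R), ArRatio r R v

/-- One-parameter `A_r` characteristic: supremum over all cubes. -/
def ArCube {d : ℕ} (r : ℝ≥0∞) (v : (Fin d → ℝ) → ℝ) : ℝ≥0∞ :=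
  ⨆ (I : Set (Fin d → ℝ)) (_ : IsCube I), ArRatio r I v

/-- `A_∞` ratio `⟨v⟩_R exp(⟨log v⁻¹⟩_R)`. -/
def AinftyRatio (R : Set X) (v : X → ℝ) : ℝ≥0∞ :=
  avgE R v * ENNReal.ofReal (Real.exp (avgR R fun x => Real.log (v x)⁻¹))

/-- Bi-parameter `A_∞` characteristic. -/
def AinftyRect {d₁ d₂ : ℕ} (v : Pt d₁ d₂ → ℝ) : ℝ≥0∞ :=
  ⨆ (R : Set (Pt d₁ d₂)) (_ : IsRect R), AinftyRatio R v

/-- Multilinear `A_{\vec p}` ratio `⟨w^p⟩_R^{1/p} ∏_i ⟨w_i^{-p_i'}⟩_R^{1/p_i'}`. -/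
def AvecRatio {n : ℕ} (p : Fin n → ℝ≥0∞) (w : Fin n → X → ℝ) (R : Set X) : ℝ≥0∞ :=
  mainFactor R (fun x => ∏ i, w i x) (∑ i, (p i)⁻¹)⁻¹ * ∏ i, dualFactor R (w i) (p i)

/-- Multilinear bi-parameter `A_{\vec p}` characteristic. -/
def AvecRect {d₁ d₂ n : ℕ} (p : Fin n → ℝ≥0∞) (w : Fin n → Pt d₁ d₂ → ℝ) : ℝ≥0∞ :=
  ⨆ (R : Set (Pt d₁ d₂)) (_ : IsRect R), AvecRatio p w R

/-- `A^*_{\vec p}` ratio: `⟨w⟩_R ⟨w_{n+1}^{-p}⟩_R^{1/p} ∏_{i=1}^n ⟨w_i^{-p_i'}⟩_R^{1/p_i'}`. -/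
def AstarRatio {n : ℕ} (p : Fin n → ℝ≥0∞) (w : Fin n → X → ℝ) (wl : X → ℝ) (R : Set X) :
    ℝ≥0∞ :=
  avgE R (fun x => (∏ i, w i x) * wl x) *
    (avgE R fun x => wl x ^ (-((∑ i, (p i)⁻¹)⁻¹).toReal)) ^ (∑ i, (p i)⁻¹).toReal *
    ∏ i, dualFactor R (w i) (p i)

/-- `A^*_{\vec p}` characteristic. -/
def AstarRect {d₁ d₂ n : ℕ} (p : Fin n → ℝ≥0∞) (w : Fin n → Pt d₁ d₂ → ℝ)
    (wl : Pt d₁ d₂ → ℝ) : ℝ≥0∞ :=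
  ⨆ (R : Set (Pt d₁ d₂)) (_ : IsRect R), AstarRatio p w wl R

/-- `μ`-weighted `ℝ≥0∞`-valued average over `R`. -/
def wAvg (R : Set X) (μ f : X → ℝ) : ℝ≥0∞ :=
  (∫⁻ x in R, ENNReal.ofReal (f x) * ENNReal.ofReal (μ x)) /
    (∫⁻ x in R, ENNReal.ofReal (μ x))

/-- `A_{q_n,q}(μ)` ratio, with ess sup interpretations when `q = ∞` or `q_n = 1`. -/
def AqRatio (qn q : ℝ≥0∞) (μ V : X → ℝ) (R : Set X) : ℝ≥0∞ :=
  (if q = ∞ then essSupE R V else (wAvg R μ fun x => V x ^ q.toReal) ^ (1 / q.toReal)) *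
  (if qn = 1 then essSupE R (fun x => (V x)⁻¹)
   else (wAvg R μ fun x => V x ^ (-(dualExp qn).toReal)) ^ (1 / (dualExp qn).toReal))

/-- `A_{q_n,q}(μ)` characteristic: supremum over rectangles. -/
def AqRect {d₁ d₂ : ℕ} (qn q : ℝ≥0∞) (μ V : Pt d₁ d₂ → ℝ) : ℝ≥0∞ :=
  ⨆ (R : Set (Pt d₁ d₂)) (_ : IsRect R), AqRatio qn q μ V R

/-- `μ`-weighted `A_1` characteristic of `u`: `sup_R ⟨u⟩_R^μ · ess sup_R u⁻¹`. -/
def A1wRect {d₁ d₂ : ℕ} (μ u : Pt d₁ d₂ → ℝ) : ℝ≥0∞ :=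
  ⨆ (R : Set (Pt d₁ d₂)) (_ : IsRect R), wAvg R μ u * essSupE R (fun x => (u x)⁻¹)

/-- `L^p` norm of an `ℝ≥0∞`-valued function, `0 < p ≤ ∞`. -/
def eNorm (g : X → ℝ≥0∞) (p : ℝ≥0∞) : ℝ≥0∞ :=
  if p = ∞ then essSup g volume else (∫⁻ x, g x ^ p.toReal) ^ (1 / p.toReal)

/-- `L^s(λ)` norm of an `ℝ≥0∞`-valued function, `0 < s < ∞`. -/
def eNormW (g : X → ℝ≥0∞) (s : ℝ) (lam : X → ℝ) : ℝ≥0∞ :=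
  (∫⁻ x, g x ^ s * ENNReal.ofReal (lam x)) ^ (1 / s)

/-- weak `L^p` quasinorm with respect to the measure `μ`. -/
def weakNorm {α : Type*} [MeasurableSpace α] (g : α → ℝ) (p : ℝ) (μ : Measure α) : ℝ≥0∞ :=
  ⨆ (t : ℝ) (_ : 0 < t), ENNReal.ofReal t * (μ {x | t < |g x|}) ^ (1 / p)

end

/-!
Write `a = q_n'`, `b = p_n'`, let `u` be the function in the `A_1(ŵ)` control and
`W = W_w`. Then `v_n ŵ^{1/b} = u^κ W^{a/b}` with `κ = (1 + a/q) / s`, and `κ + (a/b)/q = 1/p`.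
Because of this relation, Hölder's inequality for `ŵ`-averages bounds `⟨(u^κ W^{a/b})^p⟩^{1/p}` by
`⟨u⟩^κ ⟨W^q⟩^{(1/q)(a/b)}`. In the dual factor `(u^κ W^{a/b})^{-b} = u^{-κb} W^{-a}`, where `u^{-1}`
is bounded by its essential supremum. The product of the two bounds on a rectangle is
`(⟨u⟩ ess sup u⁻¹)^κ` times the `a/b`-th power of the `A_{q_n,q}` ratio of `W`.
-/

section Averages

variable {α : Type*} [MeasurableSpace α] {ν : Measure α}

theorem laverage_rpow_mul_rpow_le {f g : α → ℝ≥0∞} (hf : AEMeasurable f ν)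
    (hg : AEMeasurable g ν) {r t : ℝ} (hr : 0 ≤ r) (ht : 0 ≤ t) (hrt : r + t = 1) :
    ⨍⁻ x, f x ^ r * g x ^ t ∂ν ≤ (⨍⁻ x, f x ∂ν) ^ r * (⨍⁻ x, g x ∂ν) ^ t :=
  ENNReal.lintegral_mul_norm_pow_le (hf.smul_measure _) (hg.smul_measure _) hr ht hrt

theorem laverage_rpow_mul_le_essSup {f g : α → ℝ≥0∞} (hg : AEMeasurable g ν) {r : ℝ}
    (hr : 0 ≤ r) : ⨍⁻ x, f x ^ r * g x ∂ν ≤ essSup f ν ^ r * ⨍⁻ x, g x ∂ν := by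
  have hf : ∀ᵐ x ∂(ν Set.univ)⁻¹ • ν, f x ≤ essSup f ν :=
    Measure.ae_smul_measure (ENNReal.ae_le_essSup f) _
  rw [laverage, laverage, ← lintegral_const_mul'' _ (hg.smul_measure _)]
  refine lintegral_mono_ae ?_
  filter_upwards [hf] with x hx
  gcongr

variable {u W : α → ℝ≥0∞} {κ β p q b : ℝ}

theorem laverage_factorization_rpow_le (hu : AEMeasurable u ν) (hW : AEMeasurable W ν)
    (hκ : 0 ≤ κ) (hβ : 0 ≤ β) (hp : 0 < p) (hq : 0 < q) (hexp : κ + β / q = 1 / p) :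
    (⨍⁻ x, (u x ^ κ * W x ^ β) ^ p ∂ν) ^ (1 / p) ≤
      (⨍⁻ x, u x ∂ν) ^ κ * ((⨍⁻ x, W x ^ q ∂ν) ^ (1 / q)) ^ β := by
  have hsum : κ * p + β / q * p = 1 := by
    rw [← add_mul, hexp, one_div_mul_cancel hp.ne']
  calc (⨍⁻ x, (u x ^ κ * W x ^ β) ^ p ∂ν) ^ (1 / p)
      = (⨍⁻ x, u x ^ (κ * p) * (W x ^ q) ^ (β / q * p) ∂ν) ^ (1 / p) := by
        congr! with x
        rw [ENNReal.mul_rpow_of_nonneg _ _ hp.le, ← ENNReal.rpow_mul, ← ENNReal.rpow_mul,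
          ← ENNReal.rpow_mul, ← mul_assoc, mul_div_cancel₀ _ hq.ne']
    _ ≤ ((⨍⁻ x, u x ∂ν) ^ (κ * p) * (⨍⁻ x, W x ^ q ∂ν) ^ (β / q * p)) ^ (1 / p) := by
        gcongr
        exact laverage_rpow_mul_rpow_le hu (hW.pow_const q) (by positivity) (by positivity) hsum
    _ = (⨍⁻ x, u x ∂ν) ^ κ * ((⨍⁻ x, W x ^ q ∂ν) ^ (1 / q)) ^ β := by
        rw [ENNReal.mul_rpow_of_nonneg _ _ (by positivity), ← ENNReal.rpow_mul,
          ← ENNReal.rpow_mul, ← ENNReal.rpow_mul, mul_assoc, mul_assoc,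
          mul_one_div_cancel hp.ne', mul_one, mul_one, one_div_mul_eq_div]

theorem laverage_factorization_rpow_neg_le (hW : AEMeasurable W ν)
    (hu₀ : ∀ᵐ x ∂ν, u x ≠ 0) (hu_top : ∀ᵐ x ∂ν, u x ≠ ∞)
    (hκ : 0 ≤ κ) (hβ : 0 < β) (hb : 0 < b) :
    (⨍⁻ x, (u x ^ κ * W x ^ β) ^ (-b) ∂ν) ^ (1 / b) ≤
      essSup (fun x => (u x)⁻¹) ν ^ κ *
        ((⨍⁻ x, W x ^ (-(β * b)) ∂ν) ^ (1 / (β * b))) ^ β := by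
  calc (⨍⁻ x, (u x ^ κ * W x ^ β) ^ (-b) ∂ν) ^ (1 / b)
      = (⨍⁻ x, (u x)⁻¹ ^ (κ * b) * W x ^ (-(β * b)) ∂ν) ^ (1 / b) := by
        congr 1
        refine laverage_congr ?_
        filter_upwards [hu₀, hu_top] with x hx₀ hx_top
        have hκ₀ : u x ^ κ ≠ 0 := (ENNReal.rpow_pos (pos_iff_ne_zero.2 hx₀) hx_top).ne'
        have hκ_top : u x ^ κ ≠ ∞ := ENNReal.rpow_ne_top_of_nonneg hκ hx_top
        rw [ENNReal.rpow_neg, ENNReal.mul_rpow_of_nonneg _ _ hb.le,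
          ENNReal.mul_inv (.inl (ENNReal.rpow_pos (pos_iff_ne_zero.2 hκ₀) hκ_top).ne')
            (.inl (ENNReal.rpow_ne_top_of_nonneg hb.le hκ_top)),
          ← ENNReal.rpow_mul, ← ENNReal.rpow_mul, ENNReal.inv_rpow, ENNReal.rpow_neg]
    _ ≤ (essSup (fun x => (u x)⁻¹) ν ^ (κ * b) * ⨍⁻ x, W x ^ (-(β * b)) ∂ν) ^ (1 / b) := by
        gcongr
        exact laverage_rpow_mul_le_essSup (hW.pow_const _) (by positivity)
    _ = essSup (fun x => (u x)⁻¹) ν ^ κ *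
        ((⨍⁻ x, W x ^ (-(β * b)) ∂ν) ^ (1 / (β * b))) ^ β := by
        rw [ENNReal.mul_rpow_of_nonneg _ _ (by positivity), ← ENNReal.rpow_mul,
          ← ENNReal.rpow_mul, mul_assoc, mul_one_div_cancel hb.ne', mul_one]
        congr 2
        field_simp

/-- The Muckenhoupt-type ratio `⟨V^q⟩^{1/q} ⟨V^{-a}⟩^{1/a}`, with averages taken with respect to
`ν`. The ratio defining `A_{q_n,q}(μ)` on a rectangle `R` is the case `a = q_n'`, `ν = μ dx` on
`R`. -/
noncomputable def muckenhouptRatio (ν : Measure α) (q a : ℝ) (V : α → ℝ≥0∞) : ℝ≥0∞ :=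
  (⨍⁻ x, V x ^ q ∂ν) ^ (1 / q) * (⨍⁻ x, V x ^ (-a) ∂ν) ^ (1 / a)

theorem muckenhouptRatio_congr {V V' : α → ℝ≥0∞} (h : V =ᵐ[ν] V') :
    muckenhouptRatio ν q b V = muckenhouptRatio ν q b V' := by
  unfold muckenhouptRatio
  congr 2
  exacts [laverage_congr (h.fun_comp (· ^ q)), laverage_congr (h.fun_comp (· ^ (-b)))]

theorem muckenhouptRatio_factorization_le (hu : AEMeasurable u ν) (hW : AEMeasurable W ν)
    (hu₀ : ∀ᵐ x ∂ν, u x ≠ 0) (hu_top : ∀ᵐ x ∂ν, u x ≠ ∞)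
    (hκ : 0 ≤ κ) (hβ : 0 < β) (hp : 0 < p) (hq : 0 < q) (hb : 0 < b)
    (hexp : κ + β / q = 1 / p) :
    muckenhouptRatio ν p b (fun x => u x ^ κ * W x ^ β) ≤
      ((⨍⁻ x, u x ∂ν) * essSup (fun x => (u x)⁻¹) ν) ^ κ *
        muckenhouptRatio ν q (β * b) W ^ β := by
  unfold muckenhouptRatio
  rw [ENNReal.mul_rpow_of_nonneg _ _ hκ, ENNReal.mul_rpow_of_nonneg _ _ hβ.le, mul_mul_mul_comm]
  exact mul_le_mul' (laverage_factorization_rpow_le hu hW hκ hβ.le hp hq hexp)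
    (laverage_factorization_rpow_neg_le hW hu₀ hu_top hκ hβ hb)

end Averages

section HolderExponents

variable {p q s : ℝ≥0∞}

theorem holderConjugate_dualExp (hp : 1 ≤ p) : p.HolderConjugate (dualExp p) := by
  unfold dualExp
  split_ifs with h₁ h_top
  · subst h₁; infer_instance
  · subst h_top; infer_instance
  · have hp' : 1 < p.toReal := by
      simpa using (ENNReal.toReal_lt_toReal ENNReal.one_ne_top h_top).2 (hp.lt_of_ne' h₁)
    simpa [ENNReal.ofReal_toReal h_top, Real.conjExponent] using
      (Real.HolderConjugate.conjExponent hp').ennrealOfReal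

theorem toReal_dualExp_pos (hp : 1 < p) : 0 < (dualExp p).toReal := by
  have := holderConjugate_dualExp hp.le
  have := ENNReal.HolderConjugate.symm (p := p) (q := dualExp p)
  exact ENNReal.toReal_pos (ENNReal.HolderConjugate.ne_zero (dualExp p) p)
    ((ENNReal.HolderConjugate.lt_top_iff_one_lt (dualExp p) p).2 hp).ne

theorem holderTriple_dualExp [ENNReal.HolderTriple q s p] (hp : 1 ≤ p) :
    ENNReal.HolderTriple (dualExp p) s (dualExp q) := by
  have := holderConjugate_dualExp hp
  have hpq : p ≤ q := ENNReal.HolderTriple.le q s p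
  have := holderConjugate_dualExp (hp.trans hpq)
  have hq : q⁻¹ ≠ ∞ := ENNReal.inv_ne_top.2 (ENNReal.HolderConjugate.ne_zero q (dualExp q))
  refine ⟨(ENNReal.add_right_inj hq).1 ?_⟩
  calc q⁻¹ + ((dualExp p)⁻¹ + s⁻¹)
      = q⁻¹ + s⁻¹ + (dualExp p)⁻¹ := by ring
    _ = 1 := by
      rw [ENNReal.HolderTriple.inv_add_inv_eq_inv q s p,
        ENNReal.HolderConjugate.inv_add_inv_eq_one]
    _ = q⁻¹ + (dualExp q)⁻¹ := (ENNReal.HolderConjugate.inv_add_inv_eq_one q (dualExp q)).symm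

theorem toReal_pos_of_holderTriple [ENNReal.HolderTriple q s p] (hp₀ : p ≠ 0)
    (hpq : p < q) : 0 < s.toReal := by
  refine ENNReal.toReal_pos ?_ ?_
  · exact ((pos_iff_ne_zero.2 hp₀).trans_le (ENNReal.HolderTriple.le s q p)).ne'
  · rintro rfl
    exact hpq.ne (ENNReal.HolderTriple.unique q ∞ p q)

theorem holderTriple_inv_tsub_inv (hpq : p ≤ q) : ENNReal.HolderTriple q (p⁻¹ - q⁻¹)⁻¹ p :=
  ⟨by rw [inv_inv, add_tsub_cancel_of_le (ENNReal.inv_le_inv.2 hpq)]⟩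

theorem holderTriple_inv_add_inv [h : ENNReal.HolderTriple q s p] (r : ℝ≥0∞) :
    ENNReal.HolderTriple (r + q⁻¹)⁻¹ s (r + p⁻¹)⁻¹ :=
  ⟨by rw [inv_inv, inv_inv, add_assoc, h.inv_add_inv_eq_inv]⟩

end HolderExponents

section Weights

variable {X : Type*} [MeasureSpace X] {R : Set X} {μ : X → ℝ}

theorem wAvg_eq_laverage (hμ : AEMeasurable μ (volume.restrict R)) (f : X → ℝ) :
    wAvg R μ f = ⨍⁻ x, ENNReal.ofReal (f x)
      ∂(volume.restrict R).withDensity (fun x => ENNReal.ofReal (μ x)) := by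
  rw [laverage_eq, withDensity_apply _ .univ, Measure.restrict_univ,
    lintegral_withDensity_eq_lintegral_mul_non_measurable₀ _ hμ.ennreal_ofReal
      (by simp)]
  simp only [wAvg, Pi.mul_apply, mul_comm]

theorem AqRatio_eq_muckenhouptRatio (hμ : AEMeasurable μ (volume.restrict R)) {V : X → ℝ}
    (hV : ∀ᵐ x ∂volume.restrict R, 0 < V x) {qn q : ℝ≥0∞} (hqn : qn ≠ 1) (hq : q ≠ ∞) :
    AqRatio qn q μ V R =
      muckenhouptRatio ((volume.restrict R).withDensity (fun x => ENNReal.ofReal (μ x)))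
        q.toReal (dualExp qn).toReal (fun x => ENNReal.ofReal (V x)) := by
  have hpow (r : ℝ) : wAvg R μ (fun x => V x ^ r) = ⨍⁻ x, ENNReal.ofReal (V x) ^ r
      ∂(volume.restrict R).withDensity (fun x => ENNReal.ofReal (μ x)) := by
    rw [wAvg_eq_laverage hμ]
    refine laverage_congr (withDensity_absolutelyContinuous _ _ ?_)
    filter_upwards [hV] with x hx
    rw [ENNReal.ofReal_rpow_of_pos hx]
  simp only [AqRatio, muckenhouptRatio, if_neg hqn, if_neg hq, hpow]

theorem essSup_inv_le_essSupE {u : X → ℝ} (hu : ∀ᵐ x ∂volume.restrict R, 0 < u x) :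
    essSup (fun x => (ENNReal.ofReal (u x))⁻¹)
        ((volume.restrict R).withDensity (fun x => ENNReal.ofReal (μ x))) ≤
      essSupE R (fun x => (u x)⁻¹) := by
  refine (essSup_mono_measure (withDensity_absolutelyContinuous _ _)).trans_eq ?_
  refine essSup_congr_ae ?_
  filter_upwards [hu] with x hx
  rw [ENNReal.ofReal_inv_of_pos hx]

variable {u W V : X → ℝ} {pn p qn q : ℝ≥0∞} {κ : ℝ}

theorem AqRatio_le_of_eq_rpow_mul_rpow (hμ : AEMeasurable μ (volume.restrict R))
    (hu : AEMeasurable u (volume.restrict R)) (hW : AEMeasurable W (volume.restrict R))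
    (hu_pos : ∀ᵐ x ∂volume.restrict R, 0 < u x) (hW_pos : ∀ᵐ x ∂volume.restrict R, 0 < W x)
    (hV : ∀ᵐ x ∂volume.restrict R,
      V x = u x ^ κ * W x ^ ((dualExp qn).toReal / (dualExp pn).toReal))
    (hpn : 1 < pn) (hqn : 1 < qn) (hκ : 0 ≤ κ) (hp : 0 < p.toReal) (hq : 0 < q.toReal)
    (hexp : κ + (dualExp qn).toReal / (dualExp pn).toReal / q.toReal = 1 / p.toReal) :
    AqRatio pn p μ V R ≤
      (wAvg R μ u * essSupE R (fun x => (u x)⁻¹)) ^ κ *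
        AqRatio qn q μ W R ^ ((dualExp qn).toReal / (dualExp pn).toReal) := by
  have ha := toReal_dualExp_pos hqn
  have hb := toReal_dualExp_pos hpn
  have hac := withDensity_absolutelyContinuous (volume.restrict R) (fun x => ENNReal.ofReal (μ x))
  have hV_pos : ∀ᵐ x ∂volume.restrict R, 0 < V x := by
    filter_upwards [hu_pos, hW_pos, hV] with x hux hWx hVx
    rw [hVx]
    positivity
  have hV_ofReal : (fun x => ENNReal.ofReal (V x)) =ᵐ[volume.restrict R] fun x =>
      ENNReal.ofReal (u x) ^ κ *
        ENNReal.ofReal (W x) ^ ((dualExp qn).toReal / (dualExp pn).toReal) := by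
    filter_upwards [hu_pos, hW_pos, hV] with x hux hWx hVx
    rw [hVx, ENNReal.ofReal_rpow_of_pos hux, ENNReal.ofReal_rpow_of_pos hWx,
      ENNReal.ofReal_mul (by positivity)]
  have hratio := muckenhouptRatio_factorization_le (hu.ennreal_ofReal.mono_ac hac)
    (hW.ennreal_ofReal.mono_ac hac) (hac <| hu_pos.mono fun x hx => (ENNReal.ofReal_pos.2 hx).ne')
    (ae_of_all _ fun x => ENNReal.ofReal_ne_top) hκ (div_pos ha hb) hp hq hb hexp
  rw [div_mul_cancel₀ _ hb.ne'] at hratio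
  rw [AqRatio_eq_muckenhouptRatio hμ hV_pos hpn.ne' (ENNReal.toReal_pos_iff.1 hp).2.ne,
    AqRatio_eq_muckenhouptRatio hμ hW_pos hqn.ne' (ENNReal.toReal_pos_iff.1 hq).2.ne,
    muckenhouptRatio_congr (hac hV_ofReal), wAvg_eq_laverage hμ]
  refine hratio.trans ?_
  gcongr
  exact essSup_inv_le_essSupE hu_pos

end Weights

section Rectangles

variable {d₁ d₂ : ℕ} {R : Set (Pt d₁ d₂)}

theorem wAvg_mul_essSupE_le_A1wRect (hR : IsRect R) (μ u : Pt d₁ d₂ → ℝ) :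
    wAvg R μ u * essSupE R (fun x => (u x)⁻¹) ≤ A1wRect μ u :=
  le_iSup₂ (f := fun R (_ : IsRect R) => wAvg R μ u * essSupE R (fun x => (u x)⁻¹)) R hR

theorem AqRatio_le_AqRect (hR : IsRect R) (qn q : ℝ≥0∞) (μ V : Pt d₁ d₂ → ℝ) :
    AqRatio qn q μ V R ≤ AqRect qn q μ V :=
  le_iSup₂ (f := fun R (_ : IsRect R) => AqRatio qn q μ V R) R hR

theorem AqRect_le_of_eq_rpow_mul_rpow {μ u W V : Pt d₁ d₂ → ℝ} {pn p qn q : ℝ≥0∞} {κ : ℝ}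
    (hμ : AEMeasurable μ) (hu : AEMeasurable u) (hW : AEMeasurable W)
    (hu_pos : ∀ᵐ x, 0 < u x) (hW_pos : ∀ᵐ x, 0 < W x)
    (hV : ∀ᵐ x, V x = u x ^ κ * W x ^ ((dualExp qn).toReal / (dualExp pn).toReal))
    (hpn : 1 < pn) (hqn : 1 < qn) (hκ : 0 ≤ κ) (hp : 0 < p.toReal) (hq : 0 < q.toReal)
    (hexp : κ + (dualExp qn).toReal / (dualExp pn).toReal / q.toReal = 1 / p.toReal) :
    AqRect pn p μ V ≤
      A1wRect μ u ^ κ * AqRect qn q μ W ^ ((dualExp qn).toReal / (dualExp pn).toReal) := by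
  refine iSup₂_le fun R hR => (AqRatio_le_of_eq_rpow_mul_rpow hμ.restrict hu.restrict hW.restrict
    (ae_restrict_of_ae hu_pos) (ae_restrict_of_ae hW_pos) (ae_restrict_of_ae hV)
    hpn hqn hκ hp hq hexp).trans ?_
  gcongr
  exacts [wAvg_mul_essSupE_le_A1wRect hR μ u, AqRatio_le_AqRect hR qn q μ W]

end Rectangles

section Extrapolation

/-- The function `w_n^{a/(1+a/q)} (W_λ^q λ̂)^{1/(1+a/q)} H^{s/(p(1+a/q))}`, with
`W_λ = w_n λ̂^{1/a}` and `a = q_n'`, whose `A_1(ŵ)` characteristic controls the extrapolated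
weight. -/
noncomputable def extrapolationControl {X : Type*} (a q p s : ℝ) (wn whatl H : X → ℝ) (x : X) :
    ℝ :=
  wn x ^ (a / (1 + a / q)) * ((wn x * whatl x ^ (1 / a)) ^ q * whatl x) ^ (1 / (1 + a / q)) *
    H x ^ (s / (p * (1 + a / q)))

/-- The extrapolated weight `v_n = H^{1/p} W_λ^{q/p} λ̂^{-1/b}`, with `W_λ = w_n λ̂^{1/a}`,
`a = q_n'` and `b = p_n'`. -/
noncomputable def extrapolatedWeight {X : Type*} (a b p q : ℝ) (wn whatl H : X → ℝ) (x : X) : ℝ :=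
  H x ^ (1 / p) * (wn x * whatl x ^ (1 / a)) ^ (q / p) * whatl x ^ (-(1 / b))

variable {X : Type*} {a b p q s : ℝ} {wn whatl H : X → ℝ} {x : X}

theorem extrapolationControl_pos (hwn : 0 < wn x) (hwhatl : 0 < whatl x) (hH : 0 < H x) :
    0 < extrapolationControl a q p s wn whatl H x := by
  unfold extrapolationControl
  positivity

theorem extrapolationControl_rpow (ha : 0 < a) (hq : 0 < q) (hs : 0 < s)
    (hwn : 0 < wn x) (hwhatl : 0 < whatl x) (hH : 0 < H x) :
    extrapolationControl a q p s wn whatl H x ^ ((1 + a / q) / s) =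
      wn x ^ (a / s) * ((wn x * whatl x ^ (1 / a)) ^ q * whatl x) ^ (1 / s) * H x ^ (1 / p) := by
  have ht : 0 < 1 + a / q := by positivity
  unfold extrapolationControl
  generalize 1 + a / q = t at ht ⊢
  have hH_exp : s / (p * t) * (t / s) = 1 / p := by field_simp
  rw [Real.mul_rpow (by positivity) (by positivity), Real.mul_rpow (by positivity) (by positivity),
    ← Real.rpow_mul hwn.le, ← Real.rpow_mul (by positivity), ← Real.rpow_mul hH.le,
    div_mul_div_cancel₀ ht.ne', div_mul_div_cancel₀ ht.ne', hH_exp]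

/-- With `W_λ = w_n λ̂^{1/a}`, the exponent relations give `q/p = 1 + q/s` and
`W_λ λ̂^{-1/b} = w_n λ̂^{1/s}`, which trade the factors of `v_n` for those of the control. -/
theorem extrapolatedWeight_mul_rpow (hqsp : q.HolderTriple s p) (hbsa : b.HolderTriple s a)
    {w : ℝ} (hw : 0 < w) (hwn : 0 < wn x) (hwhatl : 0 < whatl x) (hH : 0 < H x) :
    extrapolatedWeight a b p q wn whatl H x * w ^ (1 / b) =
      extrapolationControl a q p s wn whatl H x ^ ((1 + a / q) / s) *
        (wn x * w ^ (1 / a)) ^ (a / b) := by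
  obtain ⟨hq, hs, -⟩ := hqsp.all_pos
  have ha := hbsa.pos'
  have hqp : q / p = 1 + q * (1 / s) := by
    rw [div_eq_mul_one_div, ← hqsp.one_div_add_one_div, mul_add, mul_one_div_cancel hq.ne']
  have hab : a / s + a / b = 1 := by
    rw [div_eq_mul_one_div, div_eq_mul_one_div a b, ← mul_add, add_comm,
      hbsa.one_div_add_one_div, mul_one_div_cancel ha.ne']
  set Wl := wn x * whatl x ^ (1 / a) with hWl_def
  have hWl : 0 < Wl := by positivity
  have hWl_mul : Wl * whatl x ^ (-(1 / b)) = wn x * whatl x ^ (1 / s) := by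
    rw [hWl_def, mul_assoc, ← Real.rpow_add hwhatl, ← hbsa.one_div_add_one_div]
    ring_nf
  have hW : (wn x * w ^ (1 / a)) ^ (a / b) = wn x ^ (a / b) * w ^ (1 / b) := by
    rw [Real.mul_rpow hwn.le (by positivity), ← Real.rpow_mul hw.le, one_div_mul_eq_div,
      div_div_cancel_left' ha.ne', one_div]
  calc extrapolatedWeight a b p q wn whatl H x * w ^ (1 / b)
      = H x ^ (1 / p) * Wl ^ (q * (1 / s)) * (Wl * whatl x ^ (-(1 / b))) * w ^ (1 / b) := by
        rw [extrapolatedWeight, ← hWl_def, hqp, Real.rpow_add hWl, Real.rpow_one]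
        ring
    _ = H x ^ (1 / p) * Wl ^ (q * (1 / s)) * (wn x ^ (a / s + a / b) * whatl x ^ (1 / s)) *
          w ^ (1 / b) := by
        rw [hWl_mul, hab, Real.rpow_one]
    _ = _ := by
        rw [extrapolationControl_rpow ha hq hs hwn hwhatl hH, ← hWl_def, hW,
          Real.mul_rpow (by positivity) hwhatl.le, Real.rpow_mul hWl.le, Real.rpow_add hwn]
        ring

theorem extrapolation_exponent_identity (hqsp : q.HolderTriple s p) (hbsa : b.HolderTriple s a) :
    (1 + a / q) / s + a / b / q = 1 / p := by
  calc (1 + a / q) / s + a / b / q = 1 / s + a * (1 / b + 1 / s) / q := by ring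
    _ = 1 / q + 1 / s := by rw [hbsa.one_div_add_one_div, mul_one_div_cancel hbsa.ne_zero',
        add_comm]
    _ = 1 / p := hqsp.one_div_add_one_div

end Extrapolation

theorem statement15_general {d₁ d₂ : ℕ} {pn qn p q s : ℝ≥0∞}
    [ENNReal.HolderTriple qn s pn] [ENNReal.HolderTriple q s p]
    (hpn : 1 < pn) (hpnqn : pn < qn) (hq₀ : q ≠ 0) (hq_top : q ≠ ∞)
    {what whatl wn H : Pt d₁ d₂ → ℝ} (hwhat : AEMeasurable what) (hwhatl : AEMeasurable whatl)
    (hwn : AEMeasurable wn) (hH : AEMeasurable H) (hwhat_pos : ∀ᵐ x, 0 < what x)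
    (hwhatl_pos : ∀ᵐ x, 0 < whatl x) (hwn_pos : ∀ᵐ x, 0 < wn x) (hH_pos : ∀ᵐ x, 0 < H x) :
    AqRect pn p what (fun x =>
        extrapolatedWeight (dualExp qn).toReal (dualExp pn).toReal p.toReal q.toReal wn whatl H x *
          what x ^ (1 / (dualExp pn).toReal)) ≤
      A1wRect what
          (extrapolationControl (dualExp qn).toReal q.toReal p.toReal s.toReal wn whatl H) ^
            ((1 + (dualExp qn).toReal / q.toReal) / s.toReal) *
        AqRect qn q what (fun x => wn x * what x ^ (1 / (dualExp qn).toReal)) ^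
          ((dualExp qn).toReal / (dualExp pn).toReal) := by
  have hs : 0 < s.toReal := toReal_pos_of_holderTriple (zero_lt_one.trans hpn).ne' hpnqn
  have hqsp := ENNReal.HolderTriple.toReal p (ENNReal.toReal_pos hq₀ hq_top) hs
  have := holderTriple_dualExp (q := qn) (s := s) hpn.le
  have hbsa := ENNReal.HolderTriple.toReal (dualExp qn) (toReal_dualExp_pos hpn) hs
  refine AqRect_le_of_eq_rpow_mul_rpow hwhat ?_ (by fun_prop) ?_ ?_ ?_ hpn (hpn.trans hpnqn)
    (by positivity) hqsp.pos' hqsp.pos (extrapolation_exponent_identity hqsp hbsa)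
  · unfold extrapolationControl
    fun_prop
  · filter_upwards [hwn_pos, hwhatl_pos, hH_pos] with x using extrapolationControl_pos
  · filter_upwards [hwn_pos, hwhat_pos] with x hwnx hwhatx
    positivity
  · filter_upwards [hwhat_pos, hwn_pos, hwhatl_pos, hH_pos] with x
      using extrapolatedWeight_mul_rpow hqsp hbsa

/-- Weight verification in the extrapolation proof, case `q_n > p_n`.
Here `pother` lists the exponents `p_1,…,p_{n-1}`; `1/p = ∑ 1/p_i + 1/p_n > 0`,
`1/q = 1/p - 1/p_n + 1/q_n > 0`, `1/s = 1/p_n - 1/q_n`.  If `W_w = w_n ŵ^{1/q_n'}`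
belongs to `A_{q_n,q}(ŵ)` and `H > 0` satisfies the stated `A_1(ŵ)` control with
constant `N`, then `v_n := H^{1/p} W_λ^{q/p} ŵ_λ^{-1/p_n'}` satisfies
`[v_n ŵ^{1/p_n'}]_{A_{p_n,p}(ŵ)} ≤ C(N) [W_w]_{A_{q_n,q}(ŵ)}^{q_n'/p_n'}`. -/
theorem statement15 {d₁ d₂ m : ℕ}
    (pother : Fin m → ℝ≥0∞) (hpo : ∀ i, 1 ≤ pother i)
    (pn qn : ℝ≥0∞) (hpn : 1 < pn) (hpnqn : pn < qn)
    (hinvP : 0 < (∑ i, (pother i)⁻¹) + pn⁻¹)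
    (hinvQ : 0 < (∑ i, (pother i)⁻¹) + qn⁻¹)
    (N : ℝ≥0∞) (hN : N < ∞) :
    ∃ C : ℝ≥0∞, C < ∞ ∧
      ∀ what whatl wn H : Pt d₁ d₂ → ℝ,
        Measurable what → Measurable whatl → Measurable wn → Measurable H →
        (∀ᵐ x ∂(volume : Measure (Pt d₁ d₂)), 0 < what x) →
        (∀ᵐ x ∂(volume : Measure (Pt d₁ d₂)), 0 < whatl x) →
        (∀ᵐ x ∂(volume : Measure (Pt d₁ d₂)), 0 < wn x) →
        (∀ᵐ x ∂(volume : Measure (Pt d₁ d₂)), 0 < H x) →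
        -- `W_w ∈ A_{q_n, q}(ŵ)`
        AqRect qn (((∑ i, (pother i)⁻¹) + qn⁻¹)⁻¹) what
            (fun x => wn x * what x ^ (1 / (dualExp qn).toReal)) < ∞ →
        -- the `A_1(ŵ)` control on `w_n^{q_n'/(1+q_n'/q)} (W_λ^q ŵ_λ)^{1/(1+q_n'/q)}
        --   H^{s/(p(1+q_n'/q))}` with constant `N`
        A1wRect what
            (fun x =>
              wn x ^ ((dualExp qn).toReal /
                  (1 + (dualExp qn).toReal /
                    ((((∑ i, (pother i)⁻¹) + qn⁻¹)⁻¹).toReal))) *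
              ((wn x * whatl x ^ (1 / (dualExp qn).toReal)) ^
                    ((((∑ i, (pother i)⁻¹) + qn⁻¹)⁻¹).toReal) * whatl x) ^
                  (1 / (1 + (dualExp qn).toReal /
                    ((((∑ i, (pother i)⁻¹) + qn⁻¹)⁻¹).toReal))) *
              H x ^ (((pn⁻¹ - qn⁻¹)⁻¹).toReal /
                  (((((∑ i, (pother i)⁻¹) + pn⁻¹)⁻¹).toReal) *
                    (1 + (dualExp qn).toReal /
                      ((((∑ i, (pother i)⁻¹) + qn⁻¹)⁻¹).toReal)))))
          ≤ N →
        -- conclusion: `v_n ŵ^{1/p_n'} ∈ A_{p_n,p}(ŵ)` quantitatively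
        AqRect pn (((∑ i, (pother i)⁻¹) + pn⁻¹)⁻¹) what
            (fun x =>
              (H x ^ (1 / ((((∑ i, (pother i)⁻¹) + pn⁻¹)⁻¹).toReal)) *
                (wn x * whatl x ^ (1 / (dualExp qn).toReal)) ^
                  ((((∑ i, (pother i)⁻¹) + qn⁻¹)⁻¹).toReal /
                    (((∑ i, (pother i)⁻¹) + pn⁻¹)⁻¹).toReal) *
                whatl x ^ (-(1 / (dualExp pn).toReal))) *
              what x ^ (1 / (dualExp pn).toReal))
          ≤ C *
            (AqRect qn (((∑ i, (pother i)⁻¹) + qn⁻¹)⁻¹) what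
                (fun x => wn x * what x ^ (1 / (dualExp qn).toReal))) ^
              ((dualExp qn).toReal / (dualExp pn).toReal) := by
  have hs := holderTriple_inv_tsub_inv hpnqn.le
  have hp := holderTriple_inv_add_inv (q := qn) (h := hs) (∑ i, (pother i)⁻¹)
  have hq : ∑ i, (pother i)⁻¹ + qn⁻¹ ≠ ∞ := ENNReal.add_ne_top.2
    ⟨ENNReal.sum_ne_top.2 fun i _ => ENNReal.inv_ne_top.2 (zero_lt_one.trans_le (hpo i)).ne',
      ENNReal.inv_ne_top.2 (zero_lt_one.trans (hpn.trans hpnqn)).ne'⟩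
  refine ⟨N ^ ((1 + (dualExp qn).toReal / (∑ i, (pother i)⁻¹ + qn⁻¹)⁻¹.toReal) /
      (pn⁻¹ - qn⁻¹)⁻¹.toReal), ENNReal.rpow_lt_top_of_nonneg (by positivity) hN.ne,
    fun what whatl wn H hwhat hwhatl hwn hH hwhat_pos hwhatl_pos hwn_pos hH_pos _ hA1 => ?_⟩
  refine (statement15_general (s := (pn⁻¹ - qn⁻¹)⁻¹) hpn hpnqn
    (ENNReal.inv_ne_zero.2 hq) (ENNReal.inv_ne_top.2 hinvQ.ne')
    hwhat.aemeasurable hwhatl.aemeasurable hwn.aemeasurable hH.aemeasurable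
    hwhat_pos hwhatl_pos hwn_pos hH_pos).trans ?_
  gcongr
  exact hA1
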